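/- In the process algebra 𝒢 built from a PCP instance INST: let 𝕌 = U_{i₁}U_{i₂}…U_{i_l} and 𝕍 = V_{j₁}V_{j₂}…V_{j_r} (sequential compositions), let B ∈ {ε, Z, G_v}, and let ℙ be any sequential composition of constants from {U₁,…,Uₙ,V₁,…,Vₙ}. Then I‖Bℙ𝕌 ≃ I‖Bℙ𝕍 if and only if u_{i₁}u_{i₂}…u_{i_l} = v_{j₁}v_{j₂}…v_{j_r}, and likewise I‖Bℙ𝕌 ≈ I‖Bℙ𝕍 if and only if u_{i₁}u_{i₂}…u_{i_l} = v_{j₁}v_{j₂}…v_{j_r}. -/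

import Mathlib

/-!
The proof has two ingredients.

*Getting rid of structural congruence.*  `GTrans` interleaves raw steps with `SC`.  The relation
`NStep` adds to the raw rules the rule "if `P` is a composition of empty processes then `P Q` moves
as `Q`"; `SC` is a strong bisimulation for `NStep` (`SC.nstep`), so a `GTrans`-transition is an
`NStep` followed by `SC` (`GTrans.nstep`), and transitions can be analysed by inversion.

*An abstract transition system.*  As long as `λ_I` has not been performed, the state
`I‖B T`, with `T` a sequential composition of `U`-, `V`- and `W`-constants, is described by the pair
`(B, w)`, where `w` is the word spelled by `T`.  The moves of these pairs are the relation `AStep`: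
the index actions are absorbed by the loop of `I`, letters of `w` are emitted or erased from the
left, and `G_v` may prepend words `vᵢ`.  Concrete moves follow abstract ones (`St.step`), and
abstract moves are realised by concrete ones after inert silent moves (`St.real`).
After `λ_I`, the process `C'` silently generates any `B T`, and every `B T` silently vanishes, so
all the processes `C'‖B T` reach each other silently, and processes which reach each other
silently are branching bisimilar.  Hence two states with the same description are branching
bisimilar (`branching_of_St`), and so weakly bisimilar.

Conversely, let two states with the same head `B` and words `w`, `w'` be weakly bisimilar.  If
`B` is `ε` or `Z`, emitting `w'` letter by letter forces `w'` to be a sublist of `w`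
(`sublist_of_weak`).  If `B = G_v`, the move `λ_V` stops the generation of words: it leads to
`I‖Z T`, and the answer has to be a state whose head is still `Z` (otherwise `λ_Z` could not be
answered), whose word is a sublist of `w` and has `w'` as a sublist.  By symmetry `w = w'`, and the
word of `ℙ` cancels.
-/

/-- The reflexive–transitive closure of the silent (`τ`) transitions of an LTS. -/
def SilentStar {S A : Type*} (tr : S → A → S → Prop) (τ : A) : S → S → Prop :=
  Relation.ReflTransGen (fun p q => tr p τ q)

/-- `R` is a branching bisimulation for the LTS `tr` with silent label `τ`. -/
def IsBranchingBisim {S A : Type*} (tr : S → A → S → Prop) (τ : A)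
    (R : S → S → Prop) : Prop :=
  ∀ P Q, R P Q →
    (∀ ℓ P', tr P ℓ P' →
      (ℓ = τ ∧ R P' Q) ∨
      ∃ Q'' Q', SilentStar tr τ Q Q'' ∧ tr Q'' ℓ Q' ∧ R P Q'' ∧ R P' Q') ∧
    (∀ ℓ Q', tr Q ℓ Q' →
      (ℓ = τ ∧ R P Q') ∨
      ∃ P'' P', SilentStar tr τ P P'' ∧ tr P'' ℓ P' ∧ R P'' Q ∧ R P' Q')

/-- Branching bisimilarity: the union of all branching bisimulations. -/
def BrBisim {S A : Type*} (tr : S → A → S → Prop) (τ : A) (P Q : S) : Prop :=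
  ∃ R, IsBranchingBisim tr τ R ∧ R P Q

/-- The weak step `P ⟹̂ℓ P'`. -/
def WeakStep {S A : Type*} (tr : S → A → S → Prop) (τ : A) (ℓ : A) (P P' : S) : Prop :=
  (ℓ = τ ∧ SilentStar tr τ P P') ∨
  (ℓ ≠ τ ∧ ∃ P₁ P₂, SilentStar tr τ P P₁ ∧ tr P₁ ℓ P₂ ∧ SilentStar tr τ P₂ P')

/-- `R` is a weak bisimulation for the LTS `tr` with silent label `τ`. -/
def IsWeakBisim {S A : Type*} (tr : S → A → S → Prop) (τ : A)
    (R : S → S → Prop) : Prop :=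
  ∀ P Q, R P Q →
    (∀ ℓ P', tr P ℓ P' → ∃ Q', WeakStep tr τ ℓ Q Q' ∧ R P' Q') ∧
    (∀ ℓ Q', tr Q ℓ Q' → ∃ P', WeakStep tr τ ℓ P P' ∧ R P' Q')

/-- Weak bisimilarity: the union of all weak bisimulations. -/
def WkBisim {S A : Type*} (tr : S → A → S → Prop) (τ : A) (P Q : S) : Prop :=
  ∃ R, IsWeakBisim tr τ R ∧ R P Q

/-- The process constants of the process algebra `𝒢` built from a PCP instance
with `n` pairs of words over the alphabet `α`.  `W ω (some i)` stands for
`W(ω,i)` and `W ω none` for `W(ω,0)`. -/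
inductive Cst (n : ℕ) (α : Type) : Type where
  | X | Y | Z | I | S | C | C' | D | G | G' | Gu | Gv | Gv'
  | U : Fin n → Cst n α
  | V : Fin n → Cst n α
  | W : List α → Option (Fin n) → Cst n α

/-- The labels of `𝒢`: `λ_U, λ_V, λ_D, λ_I, λ_S, λ_Z`, the indices `1,…,n`,
the letters of `α`, and the silent label `τ`. -/
inductive Lab (n : ℕ) (α : Type) : Type where
  | lU | lV | lD | lI | lS | lZ | tau
  | idx : Fin n → Lab n α
  | ltr : α → Lab n α

/-- Processes: `ε`, constants, sequential and parallel composition. -/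
inductive Proc (n : ℕ) (α : Type) : Type where
  | nil
  | cst : Cst n α → Proc n α
  | seq : Proc n α → Proc n α → Proc n α
  | par : Proc n α → Proc n α → Proc n α

/-- Shorthand for a constant viewed as a process. -/
def K {n : ℕ} {α : Type} (c : Cst n α) : Proc n α := Proc.cst c

/-- The raw transition rules of `𝒢` (from Fig. 3 of the paper), closed under
the structural rules for sequential (left) and parallel composition. -/
inductive Step {n : ℕ} {α : Type} (u v : Fin n → List α) :
    Proc n α → Lab n α → Proc n α → Prop where
  | xU : Step u v (K .X) .lU (.par (K .D) (K .Gv))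
  | xT : Step u v (K .X) .tau (K .D)
  | yT : Step u v (K .Y) .tau (K .D)
  | dT : Step u v (K .D) .tau (.par (K .D) (K .Gu))
  | dD : Step u v (K .D) .lD (K .C)
  | guT (i : Fin n) : Step u v (K .Gu) .tau (.seq (K .Gu) (K (.U i)))
  | guU (i : Fin n) : Step u v (K .Gu) .lU (.seq (K .Gv) (K (.U i)))
  | guGv' : Step u v (K .Gu) .tau (K .Gv')
  | gv'T (i : Fin n) : Step u v (K .Gv') .tau (.seq (K .Gv') (K (.V i)))
  | gv'Z : Step u v (K .Gv') .tau (K .Z)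
  | gvT (i : Fin n) : Step u v (K .Gv) .tau (.seq (K .Gv) (K (.V i)))
  | gvE : Step u v (K .Gv) .tau .nil
  | gvV : Step u v (K .Gv) .lV (K .Z)
  | zE : Step u v (K .Z) .tau .nil
  | zZ : Step u v (K .Z) .lZ .nil
  | cI : Step u v (K .C) .lI (K .I)
  | cS : Step u v (K .C) .lS (K .S)
  | cG : Step u v (K .C) .tau (.par (K .C) (K .G))
  | cGv : Step u v (K .C) .tau (.par (K .C) (K .Gv))
  | gU (i : Fin n) : Step u v (K .G) .tau (.seq (K .G) (K (.U i)))
  | gV (i : Fin n) : Step u v (K .G) .tau (.seq (K .G) (K (.V i)))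
  | gE : Step u v (K .G) .tau .nil
  | iC : Step u v (K .I) .lI (K .C')
  | iI (i : Fin n) : Step u v (K .I) (.idx i) (K .I)
  | sC : Step u v (K .S) .lS (K .C')
  | sS (a : α) : Step u v (K .S) (.ltr a) (K .S)
  | c'G : Step u v (K .C') .tau (.par (K .C') (K .G'))
  | c'E : Step u v (K .C') .tau .nil
  | g'U (i : Fin n) : Step u v (K .G') .tau (.seq (K .G') (K (.U i)))
  | g'V (i : Fin n) : Step u v (K .G') .tau (.seq (K .G') (K (.V i)))
  | g'W (ω : List α) (k : Option (Fin n)) :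
      Step u v (K .G') .tau (.seq (K .G') (K (.W ω k)))
  | g'Gv : Step u v (K .G') .tau (K .Gv)
  | g'Z : Step u v (K .G') .tau (K .Z)
  | uW (i : Fin n) : Step u v (K (.U i)) .tau (K (.W (u i) (some i)))
  | vW (i : Fin n) : Step u v (K (.V i)) .tau (K (.W (v i) (some i)))
  | wA (a : α) (ω : List α) (k : Option (Fin n)) :
      Step u v (K (.W (a :: ω) k)) (.ltr a) (K (.W ω k))
  | wI (ω : List α) (i : Fin n) :
      Step u v (K (.W ω (some i))) (.idx i) (K (.W ω none))
  | wTa (a : α) (ω : List α) (k : Option (Fin n)) :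
      Step u v (K (.W (a :: ω) k)) .tau (K (.W ω k))
  | wTi (ω : List α) (i : Fin n) :
      Step u v (K (.W ω (some i))) .tau (K (.W ω none))
  | wE : Step u v (K (.W [] none)) .tau .nil
  | seqL {P ℓ P'} (Q) : Step u v P ℓ P' → Step u v (.seq P Q) ℓ (.seq P' Q)
  | parL {P ℓ P'} (Q) : Step u v P ℓ P' → Step u v (.par P Q) ℓ (.par P' Q)
  | parR {Q ℓ Q'} (P) : Step u v Q ℓ Q' → Step u v (.par P Q) ℓ (.par P Q')

/-- Structural congruence: sequential composition is associative, parallel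
composition is associative and commutative, and `ε` is a unit for both. -/
inductive SC {n : ℕ} {α : Type} : Proc n α → Proc n α → Prop where
  | refl (P) : SC P P
  | symm {P Q} : SC P Q → SC Q P
  | trans {P Q R} : SC P Q → SC Q R → SC P R
  | seqCong {P P' Q Q'} : SC P P' → SC Q Q' → SC (.seq P Q) (.seq P' Q')
  | parCong {P P' Q Q'} : SC P P' → SC Q Q' → SC (.par P Q) (.par P' Q')
  | seqAssoc (P Q R) : SC (.seq (.seq P Q) R) (.seq P (.seq Q R))
  | parAssoc (P Q R) : SC (.par (.par P Q) R) (.par P (.par Q R))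
  | parComm (P Q) : SC (.par P Q) (.par Q P)
  | seqNilL (P) : SC (.seq .nil P) P
  | seqNilR (P) : SC (.seq P .nil) P
  | parNil (P) : SC (.par .nil P) P

/-- The transition relation of `𝒢`: the raw steps taken up to structural
congruence of processes. -/
def GTrans {n : ℕ} {α : Type} (u v : Fin n → List α) :
    Proc n α → Lab n α → Proc n α → Prop :=
  fun P ℓ Q => ∃ P' Q', SC P P' ∧ Step u v P' ℓ Q' ∧ SC Q' Q

/-- Sequential composition of a list of constants (`ε` for the empty list). -/
def seqComp {n : ℕ} {α : Type} (l : List (Cst n α)) : Proc n α :=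
  l.foldr (fun c P => .seq (.cst c) P) .nil

/-- `c` is one of the constants `U₁,…,Uₙ,V₁,…,Vₙ`. -/
def IsUV {n : ℕ} {α : Type} (c : Cst n α) : Prop :=
  (∃ i, c = Cst.U i) ∨ (∃ i, c = Cst.V i)

/-- `c` is a `W`-constant of `𝒢`, i.e. `W(ω,i)` or `W(ω,0)` with `ω` a suffix
of some `uᵢ` or `vᵢ`. -/
def IsW {n : ℕ} {α : Type} (u v : Fin n → List α) (c : Cst n α) : Prop :=
  ∃ ω k, c = Cst.W ω k ∧ ∃ i, (ω <:+ u i ∨ ω <:+ v i)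

/-- `c` is a `U`-, `V`- or `W`-constant of `𝒢`. -/
def IsUVW {n : ℕ} {α : Type} (u v : Fin n → List α) (c : Cst n α) : Prop :=
  IsUV c ∨ IsW u v c

/-- The PCP instance `(u₁,v₁),…,(uₙ,vₙ)` has a solution. -/
def HasSolution {n : ℕ} {α : Type} (u v : Fin n → List α) : Prop :=
  ∃ is : List (Fin n), is ≠ [] ∧ (is.map u).flatten = (is.map v).flatten

/-! ### Transitions and structural congruence -/

/-- `P` is built from `ε` by compositions only. -/
def Proc.IsNil {n : ℕ} {α : Type} : Proc n α → Prop
  | .nil => True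
  | .cst _ => False
  | .seq P Q => P.IsNil ∧ Q.IsNil
  | .par P Q => P.IsNil ∧ Q.IsNil

theorem Proc.IsNil.sc {n : ℕ} {α : Type} {P : Proc n α} (h : P.IsNil) : SC P .nil := by
  induction P with
  | nil => exact .refl _
  | cst c => exact h.elim
  | seq P Q ihP ihQ => exact (SC.seqCong (ihP h.1) (ihQ h.2)).trans (.seqNilL _)
  | par P Q ihP ihQ => exact (SC.parCong (ihP h.1) (ihQ h.2)).trans (.parNil _)

theorem SC.isNil_iff {n : ℕ} {α : Type} {P Q : Proc n α} (h : SC P Q) :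
    P.IsNil ↔ Q.IsNil := by
  induction h with
  | refl => rfl
  | symm _ ih => exact ih.symm
  | trans _ _ ih1 ih2 => exact ih1.trans ih2
  | _ => simp_all [Proc.IsNil, and_assoc, and_comm]

/-- The raw steps, with an additional rule letting the right component of a sequential
composition move when the left one is empty.  The congruence `SC` is not needed to apply a rule. -/
inductive NStep {n : ℕ} {α : Type} (u v : Fin n → List α) :
    Proc n α → Lab n α → Proc n α → Prop where
  | base {c ℓ P} : Step u v (.cst c) ℓ P → NStep u v (.cst c) ℓ P
  | seqL {P ℓ P'} (Q) : NStep u v P ℓ P' → NStep u v (.seq P Q) ℓ (.seq P' Q)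
  | seqR {P Q ℓ Q'} : P.IsNil → NStep u v Q ℓ Q' → NStep u v (.seq P Q) ℓ (.seq P Q')
  | parL {P ℓ P'} (Q) : NStep u v P ℓ P' → NStep u v (.par P Q) ℓ (.par P' Q)
  | parR {Q ℓ Q'} (P) : NStep u v Q ℓ Q' → NStep u v (.par P Q) ℓ (.par P Q')

theorem Step.nstep {n : ℕ} {α : Type} {u v : Fin n → List α} {P P' : Proc n α} {ℓ : Lab n α}
    (h : Step u v P ℓ P') : NStep u v P ℓ P' := by
  induction h with
  | seqL Q _ ih => exact .seqL Q ih
  | parL Q _ ih => exact .parL Q ih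
  | parR Q _ ih => exact .parR Q ih
  | _ => exact NStep.base (by constructor)

theorem Proc.IsNil.no_step {n : ℕ} {α : Type} {u v : Fin n → List α} {P P' : Proc n α}
    {ℓ : Lab n α} (hP : P.IsNil) (h : NStep u v P ℓ P') : False := by
  induction h with
  | base => exact hP
  | seqL _ _ ih => exact ih hP.1
  | seqR _ _ ih => exact ih hP.2
  | parL _ _ ih => exact ih hP.1
  | parR _ _ ih => exact ih hP.2

/-- Structural congruence is a strong bisimulation for `NStep`. -/
theorem SC.nstep {n : ℕ} {α : Type} {u v : Fin n → List α} {P Q : Proc n α} (h : SC P Q) :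
    (∀ ℓ P', NStep u v P ℓ P' → ∃ Q', NStep u v Q ℓ Q' ∧ SC P' Q') ∧
    (∀ ℓ Q', NStep u v Q ℓ Q' → ∃ P', NStep u v P ℓ P' ∧ SC P' Q') := by
  induction h with
  | refl P => exact ⟨fun ℓ P' h => ⟨P', h, .refl _⟩, fun ℓ P' h => ⟨P', h, .refl _⟩⟩
  | symm _ ih =>
    refine ⟨fun ℓ P' h => ?_, fun ℓ P' h => ?_⟩
    · obtain ⟨Q, h1, h2⟩ := ih.2 _ _ h
      exact ⟨Q, h1, h2.symm⟩
    · obtain ⟨Q, h1, h2⟩ := ih.1 _ _ h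
      exact ⟨Q, h1, h2.symm⟩
  | trans _ _ ih1 ih2 =>
    refine ⟨fun ℓ P' h => ?_, fun ℓ P' h => ?_⟩
    · obtain ⟨Q, h1, h2⟩ := ih1.1 _ _ h
      obtain ⟨R, h3, h4⟩ := ih2.1 _ _ h1
      exact ⟨R, h3, h2.trans h4⟩
    · obtain ⟨Q, h1, h2⟩ := ih2.2 _ _ h
      obtain ⟨R, h3, h4⟩ := ih1.2 _ _ h1
      exact ⟨R, h3, h4.trans h2⟩
  | seqCong hP hQ ihP ihQ =>
    refine ⟨fun ℓ P' h => ?_, fun ℓ P' h => ?_⟩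
    · cases h with
      | seqL _ h =>
        obtain ⟨R, h1, h2⟩ := ihP.1 _ _ h
        exact ⟨_, .seqL _ h1, .seqCong h2 hQ⟩
      | seqR hn h =>
        obtain ⟨R, h1, h2⟩ := ihQ.1 _ _ h
        exact ⟨_, .seqR (hP.isNil_iff.1 hn) h1, .seqCong hP h2⟩
    · cases h with
      | seqL _ h =>
        obtain ⟨R, h1, h2⟩ := ihP.2 _ _ h
        exact ⟨_, .seqL _ h1, .seqCong h2 hQ⟩
      | seqR hn h =>
        obtain ⟨R, h1, h2⟩ := ihQ.2 _ _ h
        exact ⟨_, .seqR (hP.isNil_iff.2 hn) h1, .seqCong hP h2⟩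
  | parCong hP hQ ihP ihQ =>
    refine ⟨fun ℓ P' h => ?_, fun ℓ P' h => ?_⟩
    · cases h with
      | parL _ h =>
        obtain ⟨R, h1, h2⟩ := ihP.1 _ _ h
        exact ⟨_, .parL _ h1, .parCong h2 hQ⟩
      | parR _ h =>
        obtain ⟨R, h1, h2⟩ := ihQ.1 _ _ h
        exact ⟨_, .parR _ h1, .parCong hP h2⟩
    · cases h with
      | parL _ h =>
        obtain ⟨R, h1, h2⟩ := ihP.2 _ _ h
        exact ⟨_, .parL _ h1, .parCong h2 hQ⟩
      | parR _ h =>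
        obtain ⟨R, h1, h2⟩ := ihQ.2 _ _ h
        exact ⟨_, .parR _ h1, .parCong hP h2⟩
  | seqAssoc P Q R =>
    refine ⟨fun ℓ P' h => ?_, fun ℓ P' h => ?_⟩
    · cases h with
      | seqL _ h =>
        cases h with
        | seqL _ h => exact ⟨_, .seqL _ h, .seqAssoc _ _ _⟩
        | seqR hn h => exact ⟨_, .seqR hn (.seqL _ h), .seqAssoc _ _ _⟩
      | seqR hn h => exact ⟨_, .seqR hn.1 (.seqR hn.2 h), .seqAssoc _ _ _⟩
    · cases h with
      | seqL _ h => exact ⟨_, .seqL _ (.seqL _ h), .seqAssoc _ _ _⟩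
      | seqR hn h =>
        cases h with
        | seqL _ h => exact ⟨_, .seqL _ (.seqR hn h), .seqAssoc _ _ _⟩
        | seqR hn2 h => exact ⟨_, .seqR ⟨hn, hn2⟩ h, .seqAssoc _ _ _⟩
  | parAssoc P Q R =>
    refine ⟨fun ℓ P' h => ?_, fun ℓ P' h => ?_⟩
    · cases h with
      | parL _ h =>
        cases h with
        | parL _ h => exact ⟨_, .parL _ h, .parAssoc _ _ _⟩
        | parR _ h => exact ⟨_, .parR _ (.parL _ h), .parAssoc _ _ _⟩
      | parR _ h => exact ⟨_, .parR _ (.parR _ h), .parAssoc _ _ _⟩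
    · cases h with
      | parL _ h => exact ⟨_, .parL _ (.parL _ h), .parAssoc _ _ _⟩
      | parR _ h =>
        cases h with
        | parL _ h => exact ⟨_, .parL _ (.parR _ h), .parAssoc _ _ _⟩
        | parR _ h => exact ⟨_, .parR _ h, .parAssoc _ _ _⟩
  | parComm P Q =>
    refine ⟨fun ℓ P' h => ?_, fun ℓ P' h => ?_⟩
    · cases h with
      | parL _ h => exact ⟨_, .parR _ h, .parComm _ _⟩
      | parR _ h => exact ⟨_, .parL _ h, .parComm _ _⟩
    · cases h with
      | parL _ h => exact ⟨_, .parR _ h, .parComm _ _⟩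
      | parR _ h => exact ⟨_, .parL _ h, .parComm _ _⟩
  | seqNilL P =>
    refine ⟨fun ℓ P' h => ?_, fun ℓ P' h => ⟨_, .seqR trivial h, .seqNilL _⟩⟩
    cases h with
    | seqL _ h => cases h
    | seqR _ h => exact ⟨_, h, .seqNilL _⟩
  | seqNilR P =>
    refine ⟨fun ℓ P' h => ?_, fun ℓ P' h => ⟨_, .seqL _ h, .seqNilR _⟩⟩
    cases h with
    | seqL _ h => exact ⟨_, h, .seqNilR _⟩
    | seqR _ h => cases h
  | parNil P =>
    refine ⟨fun ℓ P' h => ?_, fun ℓ P' h => ⟨_, .parR _ h, .parNil _⟩⟩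
    cases h with
    | parL _ h => cases h
    | parR _ h => exact ⟨_, h, .parNil _⟩

theorem GTrans.nstep {n : ℕ} {α : Type} {u v : Fin n → List α} {P P' : Proc n α} {ℓ : Lab n α}
    (h : GTrans u v P ℓ P') : ∃ Q, NStep u v P ℓ Q ∧ SC Q P' := by
  obtain ⟨A, A', h1, h2, h3⟩ := h
  obtain ⟨Q, h4, h5⟩ := (h1.nstep (u := u) (v := v)).2 _ _ h2.nstep
  exact ⟨Q, h4, h5.trans h3⟩

theorem Step.gtrans {n : ℕ} {α : Type} {u v : Fin n → List α} {P P' : Proc n α} {ℓ : Lab n α}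
    (h : Step u v P ℓ P') : GTrans u v P ℓ P' := ⟨P, P', .refl _, h, .refl _⟩

theorem GTrans.scL {n : ℕ} {α : Type} {u v : Fin n → List α} {P Q P' : Proc n α} {ℓ : Lab n α}
    (h0 : SC P Q) (h : GTrans u v Q ℓ P') : GTrans u v P ℓ P' := by
  obtain ⟨A, A', h1, h2, h3⟩ := h
  exact ⟨A, A', h0.trans h1, h2, h3⟩

theorem GTrans.scR {n : ℕ} {α : Type} {u v : Fin n → List α} {P P' Q' : Proc n α} {ℓ : Lab n α}
    (h : GTrans u v P ℓ P') (h0 : SC P' Q') : GTrans u v P ℓ Q' := by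
  obtain ⟨A, A', h1, h2, h3⟩ := h
  exact ⟨A, A', h1, h2, h3.trans h0⟩

theorem GTrans.seqL {n : ℕ} {α : Type} {u v : Fin n → List α} {P P' : Proc n α} {ℓ : Lab n α}
    (Q : Proc n α) (h : GTrans u v P ℓ P') : GTrans u v (.seq P Q) ℓ (.seq P' Q) := by
  obtain ⟨A, A', h1, h2, h3⟩ := h
  exact ⟨_, _, .seqCong h1 (.refl _), .seqL Q h2, .seqCong h3 (.refl _)⟩

theorem GTrans.parL {n : ℕ} {α : Type} {u v : Fin n → List α} {P P' : Proc n α} {ℓ : Lab n α}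
    (Q : Proc n α) (h : GTrans u v P ℓ P') : GTrans u v (.par P Q) ℓ (.par P' Q) := by
  obtain ⟨A, A', h1, h2, h3⟩ := h
  exact ⟨_, _, .parCong h1 (.refl _), .parL Q h2, .parCong h3 (.refl _)⟩

theorem GTrans.parR {n : ℕ} {α : Type} {u v : Fin n → List α} {P P' : Proc n α} {ℓ : Lab n α}
    (Q : Proc n α) (h : GTrans u v P ℓ P') : GTrans u v (.par Q P) ℓ (.par Q P') := by
  obtain ⟨A, A', h1, h2, h3⟩ := h
  exact ⟨_, _, .parCong (.refl _) h1, .parR Q h2, .parCong (.refl _) h3⟩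

/-! ### Silent reachability up to structural congruence -/

/-- `P` silently reaches a process structurally congruent to `Q`. -/
def SReach {n : ℕ} {α : Type} (u v : Fin n → List α) (P Q : Proc n α) : Prop :=
  ∃ Q', SilentStar (GTrans u v) .tau P Q' ∧ SC Q' Q

namespace SReach

variable {n : ℕ} {α : Type} {u v : Fin n → List α} {P Q R : Proc n α}

theorem of_sc (h : SC P Q) : SReach u v P Q := ⟨P, .refl, h⟩

theorem of_gtrans (h : GTrans u v P .tau Q) : SReach u v P Q := ⟨Q, .single h, .refl _⟩

theorem of_step (h : Step u v P .tau Q) : SReach u v P Q := of_gtrans h.gtrans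

/-- Since `GTrans` absorbs `SC`, congruences in the middle of a silent path can be removed. -/
theorem trans (h1 : SReach u v P Q) (h2 : SReach u v Q R) : SReach u v P R := by
  obtain ⟨Q1, p1, s1⟩ := h1
  obtain ⟨R1, p2, s2⟩ := h2
  rcases Relation.ReflTransGen.cases_head p2 with rfl | ⟨M, hM, p3⟩
  · exact ⟨Q1, p1, s1.trans s2⟩
  · exact ⟨R1, Relation.ReflTransGen.trans p1 (.head (GTrans.scL s1 hM) p3), s2⟩

theorem seqL (T : Proc n α) (h : SReach u v P Q) :
    SReach u v (.seq P T) (.seq Q T) := by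
  obtain ⟨Q1, p1, s1⟩ := h
  exact ⟨_, Relation.ReflTransGen.lift (fun X => Proc.seq X T) (fun _ _ h => GTrans.seqL T h) _ _ p1,
    .seqCong s1 (.refl _)⟩

theorem parL (T : Proc n α) (h : SReach u v P Q) :
    SReach u v (.par P T) (.par Q T) := by
  obtain ⟨Q1, p1, s1⟩ := h
  exact ⟨_, Relation.ReflTransGen.lift (fun X => Proc.par X T) (fun _ _ h => GTrans.parL T h) _ _ p1,
    .parCong s1 (.refl _)⟩

theorem parR (T : Proc n α) (h : SReach u v P Q) :
    SReach u v (.par T P) (.par T Q) := by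
  obtain ⟨Q1, p1, s1⟩ := h
  exact ⟨_, Relation.ReflTransGen.lift (fun X => Proc.par T X) (fun _ _ h => GTrans.parR T h) _ _ p1,
    .parCong (.refl _) s1⟩

end SReach

/-! ### States before the action `λ_I` and their abstraction -/

/-- `T` is a sequential composition of `U`-, `V`- and `W`-constants (bracketed in any way, possibly
with units) which spells the word `w`. -/
inductive Spells {n : ℕ} {α : Type} (u v : Fin n → List α) : Proc n α → List α → Prop where
  | nil : Spells u v .nil []
  | U (i) : Spells u v (.cst (.U i)) (u i)
  | V (i) : Spells u v (.cst (.V i)) (v i)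
  | W (ω k) : Spells u v (.cst (.W ω k)) ω
  | seq {P Q w₁ w₂} : Spells u v P w₁ → Spells u v Q w₂ → Spells u v (.seq P Q) (w₁ ++ w₂)

/-- The three possible values `ε`, `Z`, `G_v` of the head `B`. -/
inductive Hd where
  | e | z | g

/-- The process denoted by a head. -/
def Hd.proc {n : ℕ} {α : Type} : Hd → Proc n α
  | .e => .nil
  | .z => .cst .Z
  | .g => .cst .Gv

/-- `P` is, up to structural congruence, `I‖B T` with `B` the head `h` and `T` spelling `w`. -/
def St {n : ℕ} {α : Type} (u v : Fin n → List α) (h : Hd) (w : List α) (P : Proc n α) : Prop :=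
  ∃ T, Spells u v T w ∧ SC P (.par (.cst .I) (.seq h.proc T))

/-- The moves, other than `λ_I`, of `I‖B T` as seen on the head and the word spelled by `T`. -/
inductive AStep {n : ℕ} {α : Type} (v : Fin n → List α) :
    Hd → List α → Lab n α → Hd → List α → Prop where
  | idx (h w i) : AStep v h w (.idx i) h w
  | skip (h w) : AStep v h w .tau h w
  | zT (w) : AStep v .z w .tau .e w
  | zZ (w) : AStep v .z w .lZ .e w
  | gE (w) : AStep v .g w .tau .e w
  | gV (w) : AStep v .g w .lV .z w
  | gT (w i) : AStep v .g w .tau .g (v i ++ w)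
  | ltr (a w) : AStep v .e (a :: w) (.ltr a) .e w
  | del (a w) : AStep v .e (a :: w) .tau .e w

theorem Proc.IsNil.spells {n : ℕ} {α : Type} {u v : Fin n → List α} {P : Proc n α} {w : List α}
    (h : P.IsNil) (hw : Spells u v P w) : w = [] := by
  induction hw with
  | nil => rfl
  | seq _ _ ih1 ih2 => simp [ih1 h.1, ih2 h.2]
  | _ => exact h.elim

theorem spells_step {n : ℕ} {α : Type} {u v : Fin n → List α} {T T' : Proc n α} {w : List α}
    {ℓ : Lab n α} (hT : Spells u v T w) (h : NStep u v T ℓ T') :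
    ∃ w', Spells u v T' w' ∧ AStep v .e w ℓ .e w' := by
  induction hT generalizing T' with
  | nil => cases h
  | U i =>
    cases h with
    | base h => cases h; exact ⟨_, .W _ _, .skip _ _⟩
  | V i =>
    cases h with
    | base h => cases h; exact ⟨_, .W _ _, .skip _ _⟩
  | W ω k =>
    cases h with
    | base h =>
      cases h with
      | wA a ω => exact ⟨_, .W _ _, .ltr _ _⟩
      | wI ω i => exact ⟨_, .W _ _, .idx _ _ _⟩
      | wTa a ω => exact ⟨_, .W _ _, .del _ _⟩
      | wTi ω i => exact ⟨_, .W _ _, .skip _ _⟩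
      | wE => exact ⟨_, .nil, .skip _ _⟩
  | seq h1 h2 ih1 ih2 =>
    cases h with
    | seqL _ h =>
      obtain ⟨w1, s, a⟩ := ih1 h
      refine ⟨_, s.seq h2, ?_⟩
      cases a with
      | idx => exact .idx _ _ _
      | skip => exact .skip _ _
      | ltr => exact .ltr _ _
      | del => exact .del _ _
    | seqR hn h =>
      obtain ⟨w1, s, a⟩ := ih2 h
      refine ⟨_, h1.seq s, ?_⟩
      rw [hn.spells h1]
      exact a

/-- The only transition of a state `I‖B T` which leaves the class `St` is `λ_I`; every other
transition is an abstract step. -/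
theorem St.step {n : ℕ} {α : Type} {u v : Fin n → List α} {h : Hd} {w : List α}
    {P P' : Proc n α} {ℓ : Lab n α} (hP : St u v h w P) (hs : GTrans u v P ℓ P') :
    (ℓ = .lI ∧ ∃ T, Spells u v T w ∧ SC P' (.par (.cst .C') (.seq h.proc T))) ∨
    ∃ h' w', AStep v h w ℓ h' w' ∧ St u v h' w' P' := by
  obtain ⟨T, hT, hsc⟩ := hP
  obtain ⟨Q, hQ, hQP⟩ := (GTrans.scL hsc.symm hs).nstep
  cases hQ with
  | parL _ hQ =>
    cases hQ with
    | base hQ =>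
      cases hQ with
      | iC => exact .inl ⟨rfl, T, hT, hQP.symm⟩
      | iI i => exact .inr ⟨h, w, .idx _ _ _, T, hT, hQP.symm⟩
  | parR _ hQ =>
    right
    cases hQ with
    | seqL _ hQ =>
      cases h with
      | e => cases hQ
      | z =>
        cases hQ with
        | base hQ =>
          cases hQ with
          | zE => exact ⟨.e, w, .zT _, T, hT, hQP.symm⟩
          | zZ => exact ⟨.e, w, .zZ _, T, hT, hQP.symm⟩
      | g =>
        cases hQ with
        | base hQ =>
          cases hQ with
          | gvE => exact ⟨.e, w, .gE _, T, hT, hQP.symm⟩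
          | gvV => exact ⟨.z, w, .gV _, T, hT, hQP.symm⟩
          | gvT i =>
            exact ⟨.g, _, .gT _ i, _, (Spells.V i).seq hT,
              hQP.symm.trans (.parCong (.refl _) (.seqAssoc _ _ _))⟩
    | seqR hn hQ =>
      cases h with
      | e =>
        obtain ⟨w', s, a⟩ := spells_step hT hQ
        exact ⟨.e, w', a, _, s, hQP.symm⟩
      | z => exact hn.elim
      | g => exact hn.elim

theorem reach_W_nil {n : ℕ} {α : Type} {u v : Fin n → List α} (ω : List α)
    (k : Option (Fin n)) : SReach u v (.cst (.W ω k)) .nil := by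
  induction ω with
  | nil =>
    cases k with
    | none => exact .of_step .wE
    | some i => exact (SReach.of_step (.wTi _ _)).trans (.of_step .wE)
  | cons a ω ih => exact (SReach.of_step (.wTa a ω k)).trans ih

theorem Spells.reach_nil {n : ℕ} {α : Type} {u v : Fin n → List α} {T : Proc n α} {w : List α}
    (hT : Spells u v T w) : SReach u v T .nil := by
  induction hT with
  | nil => exact .of_sc (.refl _)
  | U i => exact (SReach.of_step (.uW i)).trans (reach_W_nil _ _)
  | V i => exact (SReach.of_step (.vW i)).trans (reach_W_nil _ _)
  | W ω k => exact reach_W_nil _ _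
  | seq _ _ ih1 ih2 => exact ((ih1.seqL _).trans (.of_sc (.seqNilL _))).trans ih2

/-- A process spelling `a :: w` silently reaches, without changing its word, a process ready to
emit or erase the letter `a`. -/
theorem Spells.expose {n : ℕ} {α : Type} {u v : Fin n → List α} {T : Proc n α} {w₀ : List α}
    (hT : Spells u v T w₀) (a : α) (w : List α) (hw : w₀ = a :: w) :
    ∃ T₁ T₂, SReach u v T T₁ ∧ Spells u v T₁ (a :: w) ∧ Spells u v T₂ w ∧
      GTrans u v T₁ (.ltr a) T₂ ∧ GTrans u v T₁ .tau T₂ := by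
  have key : ∀ k, ∃ T₂, Spells u v (.cst (.W (a :: w) k)) (a :: w) ∧ Spells u v T₂ w ∧
      GTrans u v (.cst (.W (a :: w) k)) (.ltr a) T₂ ∧
      GTrans u v (.cst (.W (a :: w) k)) .tau T₂ := fun k =>
    ⟨_, .W _ _, .W w k, (Step.wA a w k).gtrans, (Step.wTa a w k).gtrans⟩
  induction hT generalizing w with
  | nil => cases hw
  | U i =>
    obtain ⟨T₂, h⟩ := key (some i)
    exact ⟨_, T₂, by rw [← hw]; exact .of_step (.uW i), h⟩
  | V i =>
    obtain ⟨T₂, h⟩ := key (some i)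
    exact ⟨_, T₂, by rw [← hw]; exact .of_step (.vW i), h⟩
  | W ω k =>
    obtain ⟨T₂, h⟩ := key k
    exact ⟨_, T₂, by rw [← hw]; exact .of_sc (.refl _), h⟩
  | @seq P Q w1 w2 hP hQ ihP ihQ =>
    cases w1 with
    | nil =>
      obtain ⟨T₁, T₂, h1, h2⟩ := ihQ w hw key
      -- a left component with the empty word vanishes without changing the word
      exact ⟨T₁, T₂, ((hP.reach_nil.seqL _).trans (.of_sc (.seqNilL _))).trans h1, h2⟩
    | cons b w1 =>
      obtain ⟨rfl, rfl⟩ : b = a ∧ w1 ++ w2 = w := by simpa using hw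
      obtain ⟨T₁, T₂, h1, h2, h3, h4, h5⟩ := ihP w1 rfl fun k =>
        ⟨_, .W _ _, .W w1 k, (Step.wA b w1 k).gtrans, (Step.wTa b w1 k).gtrans⟩
      exact ⟨_, _, h1.seqL _, h2.seq hQ, h3.seq hQ, h4.seqL _, h5.seqL _⟩

/-- Every abstract step is either a silent loop, or can be performed by each state with the given
description after silent moves which keep the description. -/
theorem St.real {n : ℕ} {α : Type} {u v : Fin n → List α} {h h' : Hd} {w w' : List α}
    {Q : Proc n α} {ℓ : Lab n α} (hQ : St u v h w Q) (ha : AStep v h w ℓ h' w') :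
    (ℓ = .tau ∧ h' = h ∧ w' = w) ∨
    ∃ Q₁ Q₂, SilentStar (GTrans u v) .tau Q Q₁ ∧ St u v h w Q₁ ∧
      GTrans u v Q₁ ℓ Q₂ ∧ St u v h' w' Q₂ := by
  have hQ0 := hQ
  obtain ⟨T, hT, hsc⟩ := hQ
  have letter : ∀ (a : α) (w : List α) (ℓ : Lab n α), Spells u v T (a :: w) →
      ℓ = .ltr a ∨ ℓ = .tau → SC Q (.par (.cst .I) (.seq (Hd.proc .e) T)) →
      ∃ Q₁ Q₂, SilentStar (GTrans u v) .tau Q Q₁ ∧ St u v .e (a :: w) Q₁ ∧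
        GTrans u v Q₁ ℓ Q₂ ∧ St u v .e w Q₂ := by
    intro a w ℓ hT hℓ hsc
    obtain ⟨T₁, T₂, h1, h2, h3, h4, h5⟩ := hT.expose a w rfl
    have h6 : GTrans u v T₁ ℓ T₂ := by rcases hℓ with rfl | rfl <;> assumption
    obtain ⟨Q₁, p, s⟩ := (SReach.of_sc (u := u) (v := v)
      (hsc.trans (.parCong (.refl _) (.seqNilL _)))).trans (h1.parR (.cst .I))
    exact ⟨Q₁, _, p, ⟨T₁, h2, s.trans (.parCong (.refl _) (SC.seqNilL _).symm)⟩,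
      (h6.parR (.cst .I)).scL s, ⟨T₂, h3, .parCong (.refl _) (SC.seqNilL _).symm⟩⟩
  cases ha with
  | idx _ _ i =>
    exact .inr ⟨Q, _, .refl, hQ0, (Step.parL _ (Step.iI i)).gtrans.scL hsc, T, hT, .refl _⟩
  | skip => exact .inl ⟨rfl, rfl, rfl⟩
  | zT =>
    exact .inr ⟨Q, _, .refl, hQ0, (Step.parR _ (.seqL _ .zE)).gtrans.scL hsc, T, hT, .refl _⟩
  | zZ =>
    exact .inr ⟨Q, _, .refl, hQ0, (Step.parR _ (.seqL _ .zZ)).gtrans.scL hsc, T, hT, .refl _⟩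
  | gE =>
    exact .inr ⟨Q, _, .refl, hQ0, (Step.parR _ (.seqL _ .gvE)).gtrans.scL hsc, T, hT, .refl _⟩
  | gV =>
    exact .inr ⟨Q, _, .refl, hQ0, (Step.parR _ (.seqL _ .gvV)).gtrans.scL hsc, T, hT, .refl _⟩
  | gT _ i =>
    exact .inr ⟨Q, _, .refl, hQ0, (Step.parR _ (.seqL _ (.gvT i))).gtrans.scL hsc, _,
      (Spells.V i).seq hT, .parCong (.refl _) (.seqAssoc _ _ _)⟩
  | ltr a w => exact .inr (letter a _ _ hT (.inl rfl) hsc)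
  | del a w => exact .inr (letter a _ _ hT (.inr rfl) hsc)

/-! ### States after the action `λ_I` -/

theorem Spells.generate {n : ℕ} {α : Type} {u v : Fin n → List α} {T : Proc n α} {w : List α}
    (hT : Spells u v T w) : SReach u v (.cst .G') (.seq (.cst .G') T) := by
  induction hT with
  | nil => exact .of_sc (SC.seqNilR _).symm
  | U i => exact .of_step (.g'U i)
  | V i => exact .of_step (.g'V i)
  | W ω k => exact .of_step (.g'W ω k)
  | seq _ _ ih1 ih2 => exact ih2.trans ((ih1.seqL _).trans (.of_sc (.seqAssoc _ _ _)))

/-- All processes `C'‖B T` silently reach each other: `B T` vanishes, and `C'` regenerates any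
other process of this shape. -/
theorem reach_C' {n : ℕ} {α : Type} {u v : Fin n → List α} {T T' : Proc n α} {w w' : List α}
    (h h' : Hd) (hT : Spells u v T w) (hT' : Spells u v T' w') :
    SReach u v (.par (.cst .C') (.seq h.proc T)) (.par (.cst .C') (.seq h'.proc T')) := by
  have h1 : SReach u v (.seq h.proc T) .nil := by
    have h0 : SReach u v h.proc .nil := by
      cases h with
      | e => exact .of_sc (.refl _)
      | z => exact .of_step .zE
      | g => exact .of_step .gvE
    exact ((h0.seqL _).trans (.of_sc (.seqNilL _))).trans hT.reach_nil
  have h2 : SReach u v (.cst .G') (.seq h'.proc T') := by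
    have h0 : SReach u v (.cst .G') h'.proc := by
      cases h' with
      | e => exact (SReach.of_step .g'Z).trans (.of_step .zE)
      | z => exact .of_step .g'Z
      | g => exact .of_step .g'Gv
    exact hT'.generate.trans (h0.seqL _)
  refine (h1.parR _).trans ((SReach.of_sc ((SC.parComm _ _).trans (.parNil _))).trans ?_)
  exact (SReach.of_step .c'G).trans (h2.parR _)

/-! ### Equal words give branching bisimilar states -/

theorem isBranchingBisim_of_symm {S A : Type*} {tr : S → A → S → Prop} {τ : A}
    {R : S → S → Prop} (hs : ∀ P Q, R P Q → R Q P)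
    (h : ∀ P Q, R P Q → ∀ ℓ P', tr P ℓ P' → (ℓ = τ ∧ R P' Q) ∨
      ∃ Q'' Q', SilentStar tr τ Q Q'' ∧ tr Q'' ℓ Q' ∧ R P Q'' ∧ R P' Q') :
    IsBranchingBisim tr τ R := by
  intro P Q hPQ
  refine ⟨h P Q hPQ, fun ℓ Q' ht => ?_⟩
  rcases h Q P (hs _ _ hPQ) ℓ Q' ht with ⟨h1, h2⟩ | ⟨P2, P1, h1, h2, h3, h4⟩
  · exact .inl ⟨h1, hs _ _ h2⟩
  · exact .inr ⟨P2, P1, h1, h2, hs _ _ h3, hs _ _ h4⟩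

/-- The branching bisimulation: the states with a common description, together with the pairs of
processes silently reaching each other up to `SC`. -/
theorem branching_of_St {n : ℕ} {α : Type} {u v : Fin n → List α} {h : Hd} {w : List α}
    {P Q : Proc n α} (hP : St u v h w P) (hQ : St u v h w Q) :
    BrBisim (GTrans u v) .tau P Q := by
  refine ⟨fun P Q => (SReach u v P Q ∧ SReach u v Q P) ∨ ∃ h w, St u v h w P ∧ St u v h w Q,
    isBranchingBisim_of_symm ?_ ?_, .inr ⟨h, w, hP, hQ⟩⟩
  · rintro P Q (⟨h1, h2⟩ | ⟨h, w, h1, h2⟩)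
    · exact .inl ⟨h2, h1⟩
    · exact .inr ⟨h, w, h2, h1⟩
  · rintro P Q (⟨-, Q₁, h1, h2⟩ | ⟨h, w, h1, h2⟩) ℓ P₂ ht
    · -- `Q` first becomes a copy of `P`, and then repeats the move of `P`
      exact .inr ⟨Q₁, P₂, h1, ht.scL h2, .inl ⟨.of_sc h2.symm, .of_sc h2⟩,
        .inl ⟨.of_sc (.refl _), .of_sc (.refl _)⟩⟩
    · rcases h1.step ht with ⟨rfl, T, hT, hsc⟩ | ⟨h', w', ha, hP'⟩
      · obtain ⟨T', hT', hsc'⟩ := id h2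
        refine .inr ⟨Q, _, .refl, (Step.parL _ Step.iC).gtrans.scL hsc',
          .inr ⟨h, w, h1, h2⟩, .inl ⟨?_, ?_⟩⟩
        · exact (SReach.of_sc hsc).trans (reach_C' h h hT hT')
        · exact (reach_C' h h hT' hT).trans (SReach.of_sc hsc.symm)
      · rcases h2.real ha with ⟨rfl, rfl, rfl⟩ | ⟨Q₁, Q₂, p, s, t, s'⟩
        · exact .inl ⟨rfl, .inr ⟨_, _, hP', h2⟩⟩
        · exact .inr ⟨Q₁, Q₂, p, t, .inr ⟨h, w, h1, s⟩, .inr ⟨_, _, hP', s'⟩⟩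

theorem BrBisim.weak {S A : Type*} {tr : S → A → S → Prop} {τ : A} {P Q : S}
    (h : BrBisim tr τ P Q) : WkBisim tr τ P Q := by
  obtain ⟨R, hR, hPQ⟩ := h
  refine ⟨R, fun P Q hPQ => ⟨fun ℓ P' ht => ?_, fun ℓ Q' ht => ?_⟩, hPQ⟩
  · rcases (hR P Q hPQ).1 ℓ P' ht with ⟨h1, h2⟩ | ⟨Q2, Q1, h1, h2, -, h4⟩
    · exact ⟨Q, .inl ⟨h1, .refl⟩, h2⟩
    · by_cases hℓ : ℓ = τ
      · subst hℓ
        exact ⟨Q1, .inl ⟨rfl, Relation.ReflTransGen.tail h1 h2⟩, h4⟩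
      · exact ⟨Q1, .inr ⟨hℓ, Q2, Q1, h1, h2, .refl⟩, h4⟩
  · rcases (hR P Q hPQ).2 ℓ Q' ht with ⟨h1, h2⟩ | ⟨P2, P1, h1, h2, -, h4⟩
    · exact ⟨P, .inl ⟨h1, .refl⟩, h2⟩
    · by_cases hℓ : ℓ = τ
      · subst hℓ
        exact ⟨P1, .inl ⟨rfl, Relation.ReflTransGen.tail h1 h2⟩, h4⟩
      · exact ⟨P1, .inr ⟨hℓ, P2, P1, h1, h2, .refl⟩, h4⟩

/-! ### Weakly bisimilar states have equal words -/

open scoped List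

theorem IsWeakBisim.swap {S A : Type*} {tr : S → A → S → Prop} {τ : A} {R : S → S → Prop}
    (hR : IsWeakBisim tr τ R) : IsWeakBisim tr τ (fun P Q => R Q P) :=
  fun P Q h => ⟨(hR Q P h).2, (hR Q P h).1⟩

theorem IsWeakBisim.silent {S A : Type*} {tr : S → A → S → Prop} {τ : A} {R : S → S → Prop}
    (hR : IsWeakBisim tr τ R) {P Q P' : S} (h : R P Q) (hs : SilentStar tr τ P P') :
    ∃ Q', SilentStar tr τ Q Q' ∧ R P' Q' := by
  induction hs with
  | refl => exact ⟨Q, .refl, h⟩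
  | tail _ ht ih =>
    obtain ⟨Q1, p1, r1⟩ := ih
    obtain ⟨Q2, hw, r2⟩ := (hR _ _ r1).1 _ _ ht
    rcases hw with ⟨-, p2⟩ | ⟨hne, -⟩
    · exact ⟨Q2, Relation.ReflTransGen.trans p1 p2, r2⟩
    · exact (hne rfl).elim

theorem IsWeakBisim.visible {S A : Type*} {tr : S → A → S → Prop} {τ : A} {R : S → S → Prop}
    (hR : IsWeakBisim tr τ R) {P Q P₁ P₂ : S} {ℓ : A} (hℓ : ℓ ≠ τ) (h : R P Q)
    (hs : SilentStar tr τ P P₁) (ht : tr P₁ ℓ P₂) :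
    ∃ Q₁ Q₂ Q', SilentStar tr τ Q Q₁ ∧ tr Q₁ ℓ Q₂ ∧ SilentStar tr τ Q₂ Q' ∧ R P₂ Q' := by
  obtain ⟨Q1, p1, r1⟩ := hR.silent h hs
  obtain ⟨Q2, hw, r2⟩ := (hR _ _ r1).1 _ _ ht
  rcases hw with ⟨h0, -⟩ | ⟨-, A, B, p2, t, p3⟩
  · exact (hℓ h0).elim
  · exact ⟨A, B, Q2, Relation.ReflTransGen.trans p1 p2, t, p3, r2⟩

theorem St.step_of_ne {n : ℕ} {α : Type} {u v : Fin n → List α} {h : Hd} {w : List α}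
    {P P' : Proc n α} {ℓ : Lab n α} (hP : St u v h w P) (hs : GTrans u v P ℓ P')
    (hℓ : ℓ ≠ .lI) : ∃ h' w', AStep v h w ℓ h' w' ∧ St u v h' w' P' := by
  rcases hP.step hs with ⟨h0, -⟩ | h0
  · exact (hℓ h0).elim
  · exact h0

/-- A property of descriptions which is stable under silent abstract steps is preserved along
silent paths. -/
theorem St.silent {n : ℕ} {α : Type} {u v : Fin n → List α} {P P' : Proc n α}
    (I : Hd → List α → Prop)
    (hI : ∀ h w h' w', I h w → AStep v h w .tau h' w' → I h' w')
    (hP : ∃ h w, I h w ∧ St u v h w P) (hs : SilentStar (GTrans u v) .tau P P') :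
    ∃ h w, I h w ∧ St u v h w P' := by
  induction hs with
  | refl => exact hP
  | tail _ ht ih =>
    obtain ⟨h, w, hi, hst⟩ := ih
    obtain ⟨h', w', ha, hst'⟩ := hst.step_of_ne ht (by simp)
    exact ⟨h', w', hI _ _ _ _ hi ha, hst'⟩

/-- Without `G_v` at the head, silent moves only erase letters. -/
theorem St.silent_sublist {n : ℕ} {α : Type} {u v : Fin n → List α} {P P' : Proc n α}
    {h : Hd} {w : List α} (hh : h ≠ .g) (hP : St u v h w P)
    (hs : SilentStar (GTrans u v) .tau P P') :
    ∃ h' w', (h' ≠ .g ∧ w' <+ w) ∧ St u v h' w' P' := by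
  refine St.silent (fun h' w' => h' ≠ .g ∧ w' <+ w) ?_ ⟨h, w, ⟨hh, .refl _⟩, hP⟩ hs
  rintro h w1 h' w2 ⟨h1, h2⟩ ha
  cases ha with
  | skip => exact ⟨h1, h2⟩
  | zT => exact ⟨by simp, h2⟩
  | gE => exact (h1 rfl).elim
  | gT => exact (h1 rfl).elim
  | del a => exact ⟨by simp, (List.sublist_cons_self _ _).trans h2⟩

theorem sublist_of_weak_e {n : ℕ} {α : Type} {u v : Fin n → List α}
    {R : Proc n α → Proc n α → Prop} (hR : IsWeakBisim (GTrans u v) .tau R) (w' : List α) :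
    ∀ {P Q : Proc n α} {h : Hd} {w : List α}, h ≠ .g → R P Q → St u v .e w' P →
      St u v h w Q → w' <+ w := by
  induction w' with
  | nil => intros; exact List.nil_sublist _
  | cons a w' ih =>
    intro P Q h w hh hPQ hP hQ
    rcases hP.real (.ltr a w') with ⟨h0, -⟩ | ⟨P₁, P₂, p, -, t, hP₂⟩
    · cases h0
    obtain ⟨Q₁, Q₂, Q', q1, q2, q3, hr⟩ := hR.visible (by simp) hPQ p t
    obtain ⟨h1, w1, ⟨hh1, hw1⟩, hQ₁⟩ := hQ.silent_sublist hh q1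
    obtain ⟨h2, w2, ha, hQ₂⟩ := hQ₁.step_of_ne q2 (by simp)
    cases ha
    obtain ⟨h3, w3, ⟨hh3, hw3⟩, hQ'⟩ := hQ₂.silent_sublist (by simp) q3
    exact (((ih hh3 hr hP₂ hQ').trans hw3).cons_cons a).trans hw1

theorem sublist_of_weak {n : ℕ} {α : Type} {u v : Fin n → List α}
    {R : Proc n α → Proc n α → Prop} (hR : IsWeakBisim (GTrans u v) .tau R) {w w' : List α}
    {P Q : Proc n α} {h h' : Hd} (hh : h ≠ .g) (hh' : h' ≠ .g) (hPQ : R P Q)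
    (hP : St u v h' w' P) (hQ : St u v h w Q) : w' <+ w := by
  cases h' with
  | e => exact sublist_of_weak_e hR w' hh hPQ hP hQ
  | g => exact (hh' rfl).elim
  | z =>
    rcases hP.real (.zT w') with ⟨-, h0, -⟩ | ⟨P₁, P₂, p, -, t, hP₂⟩
    · cases h0
    obtain ⟨Q', q, hr⟩ := hR.silent hPQ (Relation.ReflTransGen.tail p t)
    obtain ⟨h1, w1, ⟨hh1, hw1⟩, hQ'⟩ := hQ.silent_sublist hh q
    exact (sublist_of_weak_e hR w' hh1 hr hP₂ hQ').trans hw1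

/-- When `G_v` is at the head of both states, the word of the answering state `Q` is a sublist of
the word of the attacking state `P`. -/
theorem sublist_of_weak_g {n : ℕ} {α : Type} {u v : Fin n → List α}
    {R : Proc n α → Proc n α → Prop} (hR : IsWeakBisim (GTrans u v) .tau R) {w w' : List α}
    {P Q : Proc n α} (hPQ : R P Q) (hP : St u v .g w P) (hQ : St u v .g w' Q) : w' <+ w := by
  rcases hP.real (.gV w) with ⟨h0, -⟩ | ⟨P₁, P₂, p, -, t, hP₂⟩
  · cases h0
  obtain ⟨Q₁, Q₂, Q', q1, q2, q3, hr⟩ := hR.visible (by simp) hPQ p t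
  -- before `λ_V`, the head `G_v` can only prepend words
  obtain ⟨h1, w1, hi1, hQ₁⟩ := St.silent (u := u) (v := v)
    (fun h x => h = .e ∨ (h = .g ∧ w' <+ x)) (by
      rintro h x h' x' (rfl | ⟨rfl, hx⟩) ha
      · cases ha <;> exact .inl rfl
      · cases ha with
        | skip => exact .inr ⟨rfl, hx⟩
        | gE => exact .inl rfl
        | gT _ i => exact .inr ⟨rfl, hx.trans (List.sublist_append_right _ _)⟩)
    ⟨.g, w', .inr ⟨rfl, .refl _⟩, hQ⟩ q1
  obtain ⟨h2, w2, ha, hQ₂⟩ := hQ₁.step_of_ne q2 (by simp)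
  cases ha
  have hw1 : w' <+ w1 := by
    rcases hi1 with h0 | ⟨-, h0⟩
    · cases h0
    · exact h0
  obtain ⟨h3, w3, hi3, hQ'⟩ := St.silent (u := u) (v := v)
    (fun h x => h = .e ∨ (h = .z ∧ x = w1)) (by
      rintro h x h' x' (rfl | ⟨rfl, rfl⟩) ha
      · cases ha <;> exact .inl rfl
      · cases ha with
        | skip => exact .inr ⟨rfl, rfl⟩
        | zT => exact .inl rfl)
    ⟨.z, w1, .inr ⟨rfl, rfl⟩, hQ₂⟩ q3
  rcases hi3 with rfl | ⟨rfl, rfl⟩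
  · -- the head `Z` is lost: `λ_Z` cannot be answered
    exfalso
    rcases hP₂.real (.zZ w) with ⟨h0, -⟩ | ⟨P₃, P₄, p', -, t', -⟩
    · cases h0
    obtain ⟨A, B, -, a1, a2, -, -⟩ := hR.visible (by simp) hr p' t'
    obtain ⟨h4, w4, rfl, hA⟩ := St.silent (u := u) (v := v) (fun h _ => h = .e)
      (by rintro h x h' x' rfl ha; cases ha <;> rfl) ⟨_, _, rfl, hQ'⟩ a1
    obtain ⟨h5, w5, ha, -⟩ := hA.step_of_ne a2 (by simp)
    cases ha
  · exact hw1.trans (sublist_of_weak hR.swap (by simp) (by simp) hr hQ' hP₂)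

theorem eq_of_weak {n : ℕ} {α : Type} {u v : Fin n → List α} {h : Hd} {w w' : List α}
    {P Q : Proc n α} (hPQ : WkBisim (GTrans u v) .tau P Q) (hP : St u v h w P)
    (hQ : St u v h w' Q) : w = w' := by
  obtain ⟨R, hR, hr⟩ := hPQ
  have key : w <+ w' ∧ w' <+ w := by
    cases h with
    | g => exact ⟨sublist_of_weak_g hR.swap hr hQ hP, sublist_of_weak_g hR hr hP hQ⟩
    | e => exact ⟨sublist_of_weak hR (by simp) (by simp) hr hP hQ,
        sublist_of_weak hR.swap (by simp) (by simp) hr hQ hP⟩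
    | z => exact ⟨sublist_of_weak hR (by simp) (by simp) hr hP hQ,
        sublist_of_weak hR.swap (by simp) (by simp) hr hQ hP⟩
  exact key.1.antisymm key.2

theorem spells_seqComp_U {n : ℕ} {α : Type} (u v : Fin n → List α) (is : List (Fin n)) :
    Spells u v (seqComp (is.map fun i => Cst.U i)) (is.map u).flatten := by
  induction is with
  | nil => exact .nil
  | cons i is ih => exact (Spells.U i).seq ih

theorem spells_seqComp_V {n : ℕ} {α : Type} (u v : Fin n → List α) (js : List (Fin n)) :
    Spells u v (seqComp (js.map fun j => Cst.V j)) (js.map v).flatten := by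
  induction js with
  | nil => exact .nil
  | cons i is ih => exact (Spells.V i).seq ih

theorem exists_spells {n : ℕ} {α : Type} (u v : Fin n → List α) (lp : List (Cst n α))
    (hlp : ∀ c ∈ lp, IsUV c) : ∃ w, Spells u v (seqComp lp) w := by
  induction lp with
  | nil => exact ⟨_, .nil⟩
  | cons c l ih =>
    obtain ⟨w, hw⟩ := ih fun d hd => hlp d (List.mem_cons_of_mem _ hd)
    rcases hlp c List.mem_cons_self with ⟨i, rfl⟩ | ⟨i, rfl⟩
    · exact ⟨_, (Spells.U i).seq hw⟩
    · exact ⟨_, (Spells.V i).seq hw⟩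

/-- Lemma 6(1) of the paper: for `𝕌 = U_{i₁}…U_{i_l}`, `𝕍 = V_{j₁}…V_{j_r}`,
`B ∈ {ε, Z, G_v}` and any `ℙ`:  `I‖Bℙ𝕌 ≃ I‖Bℙ𝕍` iff
`u_{i₁}…u_{i_l} = v_{j₁}…v_{j_r}`, and likewise for `≈`. -/
theorem I_checks_strings {n : ℕ} {α : Type} [Fintype α]
    (u v : Fin n → List α) (hu : ∀ i, u i ≠ []) (hv : ∀ i, v i ≠ [])
    (is js : List (Fin n))
    (B : Proc n α) (hB : B = Proc.nil ∨ B = K Cst.Z ∨ B = K Cst.Gv)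
    (lp : List (Cst n α)) (hlp : ∀ c ∈ lp, IsUV c) :
    let UU : Proc n α := seqComp (is.map fun i => Cst.U i)
    let VV : Proc n α := seqComp (js.map fun j => Cst.V j)
    let P : Proc n α := seqComp lp
    (BrBisim (GTrans u v) Lab.tau
        (.par (K .I) (.seq B (.seq P UU))) (.par (K .I) (.seq B (.seq P VV))) ↔
      (is.map u).flatten = (js.map v).flatten) ∧
    (WkBisim (GTrans u v) Lab.tau
        (.par (K .I) (.seq B (.seq P UU))) (.par (K .I) (.seq B (.seq P VV))) ↔
      (is.map u).flatten = (js.map v).flatten) := by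
  intro UU VV P
  obtain ⟨h, rfl⟩ : ∃ h : Hd, B = h.proc := by
    rcases hB with rfl | rfl | rfl
    · exact ⟨.e, rfl⟩
    · exact ⟨.z, rfl⟩
    · exact ⟨.g, rfl⟩
  obtain ⟨w, hw⟩ := exists_spells u v lp hlp
  have hU : St u v h (w ++ (is.map u).flatten) (.par (K .I) (.seq h.proc (.seq P UU))) :=
    ⟨_, hw.seq (spells_seqComp_U u v is), .refl _⟩
  have hV : St u v h (w ++ (js.map v).flatten) (.par (K .I) (.seq h.proc (.seq P VV))) :=
    ⟨_, hw.seq (spells_seqComp_V u v js), .refl _⟩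
  have back : (is.map u).flatten = (js.map v).flatten →
      BrBisim (GTrans u v) Lab.tau (.par (K .I) (.seq h.proc (.seq P UU)))
        (.par (K .I) (.seq h.proc (.seq P VV))) := fun he =>
    branching_of_St hU (he ▸ hV)
  have forth : WkBisim (GTrans u v) Lab.tau (.par (K .I) (.seq h.proc (.seq P UU)))
        (.par (K .I) (.seq h.proc (.seq P VV))) →
      (is.map u).flatten = (js.map v).flatten := fun hb =>
    List.append_cancel_left (eq_of_weak hb hU hV)
  exact ⟨⟨fun hb => forth hb.weak, back⟩, ⟨forth, fun he => (back he).weak⟩⟩
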